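/- Fix real numbers λ₁ > λ₂ > λ₃ > λ₄ with λᵢ+λⱼ > 0 for all i ≠ j. Let a, b be real numbers with a² ≠ b² and (a,b) ≠ (0,0), and let p = (0,a,0,0,b,0) ∈ ℝ⁶ (an equilibrium M²_{a,b} in the Cartan subalgebra t₂). Then the Jacobian DG(p) has complex eigenvalues 0 (multiplicity 2) together with two distinct nonzero real numbers A, −A and two nonzero purely imaginary numbers iB, −iB (A, B > 0); i.e. every equilibrium of the Weyl group orbit in t₂ is non-degenerate of center-saddle type, hence unstable. -/

import Mathlib

/-!
At `p = (0, a, 0, 0, b, 0)` the rows of `DG(p)` belonging to `x₂` and `y₂` vanish, and the remaining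
block maps `(x₁, y₁)` to `(x₃, y₃)` and vice versa, so the characteristic polynomial is
`X² (X⁴ - T X² + D)`. With `D = -16 (λ₂²-λ₃²)(λ₁²-λ₂²)(λ₁²-λ₄²)(λ₃²-λ₄²)(a²-b²)²`, the ordering of the
`λᵢ` and positivity of their pairwise sums give `D < 0`. The quadratic `Z² - T Z + D` thus has one
positive root `A²` and one negative root `-B²`, which gives the eigenvalues `±A` and `±iB`.
-/

open Polynomial

/-- The Hamiltonian vector field `G` of the integral `I` of the SO(4) free
rigid body with respect to the minus Lie–Poisson structure, in coordinates
`(x₁,x₂,x₃,y₁,y₂,y₃) = (p 0, p 1, p 2, p 3, p 4, p 5)`. -/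
noncomputable def rbG (l1 l2 l3 l4 : ℝ) (p : Fin 6 → ℝ) : Fin 6 → ℝ :=
  ![2*(l2^2-l3^2) * (p 1 * p 2 - p 4 * p 5),
    2*(l3^2-l1^2) * (p 2 * p 0 - p 5 * p 3),
    2*(l1^2-l2^2) * (p 0 * p 1 - p 3 * p 4),
    2*(l4^2-l1^2) * (p 1 * p 5 - p 2 * p 4),
    2*(l4^2-l2^2) * (p 2 * p 3 - p 0 * p 5),
    2*(l4^2-l3^2) * (p 0 * p 4 - p 1 * p 3)]

/-- The Jacobian matrix of `G` at a point `p`. -/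
noncomputable def JacG (l1 l2 l3 l4 : ℝ) (p : Fin 6 → ℝ) :
    Matrix (Fin 6) (Fin 6) ℝ :=
  Matrix.of fun i j => fderiv ℝ (fun q => rbG l1 l2 l3 l4 q i) p (Pi.single j 1)

/-- The matrix `DG(p)` at `p = (0, a, 0, 0, b, 0)`; `c₁, c₃, c₄, c₆` are the coefficients of the
corresponding components of `G`. -/
def linG {R : Type*} [CommRing R] (c₁ c₃ c₄ c₆ a b : R) : Matrix (Fin 6) (Fin 6) R :=
  !![0, 0, c₁ * a, 0, 0, -(c₁ * b);
     0, 0, 0, 0, 0, 0;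
     c₃ * a, 0, 0, -(c₃ * b), 0, 0;
     0, 0, -(c₄ * b), 0, 0, c₄ * a;
     0, 0, 0, 0, 0, 0;
     c₆ * b, 0, 0, -(c₆ * a), 0, 0]

lemma JacG_eq_linG (l1 l2 l3 l4 a b : ℝ) :
    JacG l1 l2 l3 l4 ![0, a, 0, 0, b, 0] =
      linG (2*(l2^2-l3^2)) (2*(l1^2-l2^2)) (2*(l4^2-l1^2)) (2*(l4^2-l3^2)) a b := by
  have key : ∀ (c : ℝ) (i j k l : Fin 6) (p v : Fin 6 → ℝ),
      fderiv ℝ (fun q : Fin 6 → ℝ => c * (q i * q j - q k * q l)) p v =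
        c * ((p i * v j + p j * v i) - (p k * v l + p l * v k)) := by
    intro c i j k l p v
    have h := fun i : Fin 6 => hasFDerivAt_apply (𝕜 := ℝ) i p
    have := ((((h i).mul (h j)).sub ((h k).mul (h l))).const_mul c).fderiv
    refine (DFunLike.congr_fun this v).trans ?_
    simp
  ext i j
  fin_cases i <;>
    simp only [JacG, rbG, Matrix.of_apply, Fin.mk_one, Fin.zero_eta, Fin.reduceFinMk,
      Matrix.cons_val, key] <;>
    fin_cases j <;> simp [linG]

lemma charpoly_linG {R : Type*} [CommRing R] (c₁ c₃ c₄ c₆ a b : R) :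
    (linG c₁ c₃ c₄ c₆ a b).charpoly =
      X ^ 2 * (X ^ 4 - C (c₁ * c₃ * a^2 - c₁ * c₆ * b^2 + c₃ * c₄ * b^2 - c₄ * c₆ * a^2) * X ^ 2
        + C (-(c₁ * c₃ * c₄ * c₆ * (a^2 - b^2)^2))) := by
  have hM : (linG c₁ c₃ c₄ c₆ a b).charmatrix =
      !![X, 0, -C (c₁ * a), 0, 0, C (c₁ * b);
         0, X, 0, 0, 0, 0;
         -C (c₃ * a), 0, X, C (c₃ * b), 0, 0;
         0, 0, C (c₄ * b), X, 0, -C (c₄ * a);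
         0, 0, 0, 0, X, 0;
         -C (c₆ * b), 0, 0, C (c₆ * a), 0, X] := by
    ext1 i j
    fin_cases i <;> fin_cases j <;> simp [linG, Matrix.charmatrix_apply]
  rw [Matrix.charpoly, hM]
  -- Expand along the rows of `x₂` and `y₂`, whose only nonzero entry is the diagonal `X`.
  rw [Matrix.det_succ_row _ 1]
  simp only [Fin.sum_univ_six]
  simp
  rw [Matrix.det_succ_row _ 3]
  simp only [Fin.sum_univ_five]
  simp [Matrix.det_succ_row_zero, Fin.sum_univ_succ, Fin.succAbove]
  ring

/-- A real monic quadratic `Z² - T Z + D` with `D < 0` has a positive root `A²` and a negative root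
`-B²`; stated through their sum and product. -/
lemma exists_roots (T D : ℝ) (hD : D < 0) :
    ∃ A B : ℝ, 0 < A ∧ 0 < B ∧ A^2 - B^2 = T ∧ -(A^2 * B^2) = D := by
  have hs : Real.sqrt (T^2 - 4*D) ^ 2 = T^2 - 4*D := Real.sq_sqrt (by nlinarith [sq_nonneg T])
  have hlt : |T| < Real.sqrt (T^2 - 4*D) := by
    rw [← Real.sqrt_sq_eq_abs]
    exact Real.sqrt_lt_sqrt (sq_nonneg T) (by linarith)
  set s := Real.sqrt (T^2 - 4*D)
  have h := abs_lt.mp hlt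
  have h1 : 0 < (s + T) / 2 := by linarith
  have h2 : 0 < (s - T) / 2 := by linarith
  refine ⟨_, _, Real.sqrt_pos.mpr h1, Real.sqrt_pos.mpr h2, ?_, ?_⟩
  · rw [Real.sq_sqrt h1.le, Real.sq_sqrt h2.le]; ring
  · rw [Real.sq_sqrt h1.le, Real.sq_sqrt h2.le]; linarith

/-- at the equilibrium `M²_{a,b} = (0,a,0,0,b,0)` in `t₂` with
`a² ≠ b²` and `(a,b) ≠ (0,0)`, the Jacobian of `G` has eigenvalues `0`
(multiplicity 2), two distinct nonzero real numbers `A, −A`, and two nonzero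
purely imaginary numbers `±iB` (center-saddle spectrum, hence instability). -/
theorem stmt16 (l1 l2 l3 l4 : ℝ)
    (h12 : l2 < l1) (h23 : l3 < l2) (h34 : l4 < l3)
    (hp12 : 0 < l1 + l2) (hp13 : 0 < l1 + l3) (hp14 : 0 < l1 + l4)
    (hp23 : 0 < l2 + l3) (hp24 : 0 < l2 + l4) (hp34 : 0 < l3 + l4)
    (a b : ℝ) (hab : a^2 ≠ b^2) (h0 : ¬(a = 0 ∧ b = 0)) :
    ∃ A B : ℝ, 0 < A ∧ 0 < B ∧
      ((JacG l1 l2 l3 l4 ![0, a, 0, 0, b, 0]).map Complex.ofReal).charpoly =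
        X^2 * (X - C (A : ℂ)) * (X + C (A : ℂ)) *
          (X - C ((B : ℂ) * Complex.I)) * (X + C ((B : ℂ) * Complex.I)) := by
  have sqlt : ∀ x y : ℝ, y < x → 0 < x + y → 0 < x^2 - y^2 := fun x y h h' => by
    nlinarith [mul_pos (sub_pos.mpr h) h']
  have k1 := sqlt _ _ h23 hp23
  have k3 := sqlt _ _ h12 hp12
  have k4 := sqlt l1 l4 (by linarith) hp14
  have k6 := sqlt _ _ h34 hp34
  have kab : 0 < (a^2 - b^2)^2 := by
    have := sub_ne_zero.mpr hab
    positivity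
  obtain ⟨c₁, e1⟩ : ∃ c, c = 2*(l2^2-l3^2) := ⟨_, rfl⟩
  obtain ⟨c₃, e3⟩ : ∃ c, c = 2*(l1^2-l2^2) := ⟨_, rfl⟩
  obtain ⟨c₄, e4⟩ : ∃ c, c = 2*(l4^2-l1^2) := ⟨_, rfl⟩
  obtain ⟨c₆, e6⟩ : ∃ c, c = 2*(l4^2-l3^2) := ⟨_, rfl⟩
  have hD : -(c₁ * c₃ * c₄ * c₆ * (a^2 - b^2)^2) < 0 := by
    have p1 : 0 < c₁ := by linarith
    have p3 : 0 < c₃ := by linarith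
    have p46 : 0 < c₄ * c₆ := mul_pos_of_neg_of_neg (by linarith) (by linarith)
    have := mul_pos (mul_pos (mul_pos p1 p3) p46) kab
    linarith
  obtain ⟨A, B, hA, hB, hT, hP⟩ := exists_roots
    (c₁ * c₃ * a^2 - c₁ * c₆ * b^2 + c₃ * c₄ * b^2 - c₄ * c₆ * a^2) _ hD
  refine ⟨A, B, hA, hB, ?_⟩
  have hmap : ∀ M : Matrix (Fin 6) (Fin 6) ℝ,
      (M.map Complex.ofReal).charpoly = M.charpoly.map Complex.ofRealHom :=
    fun M => Matrix.charpoly_map M Complex.ofRealHom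
  rw [hmap, JacG_eq_linG, ← e1, ← e3, ← e4, ← e6, charpoly_linG, ← hT, ← hP]
  have hI : (C Complex.I : ℂ[X]) ^ 2 = -1 := by
    rw [← C_pow, Complex.I_sq, C_neg, C_1]
  simp only [Polynomial.map_mul, Polynomial.map_add, Polynomial.map_sub, Polynomial.map_neg, Polynomial.map_pow,
    Polynomial.map_X, Polynomial.map_C, map_sub, map_neg, map_mul, map_pow,
    Complex.ofRealHom_eq_coe]
  linear_combination (X^2 * (X^2 - C (A:ℂ)^2) * C (B:ℂ)^2) * hI
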